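/- Let A = (a_{ij}), C ∈ ^cΞ with ro(A) = co(C), and suppose that C − R·E^θ_{h+1,h} is a diagonal matrix for some h with 1 ≤ h ≤ r−1 and some R ∈ ℕ. Then, as functions on X_c × X_c, e_C ∗ e_A = Σ_t q^{Σ_{(j,u): j < u} a_{h+1,j} t_u} · (Π_{u=1}^{𝔫} [a_{h+1,u} + t_u ; t_u]_q) · e_{A − Σ_{u=1}^{𝔫} t_u (E^θ_{h,u} − E^θ_{h+1,u})}, where the sum is over all t = (t_1, …, t_𝔫) ∈ ℕ^𝔫 with Σ_{u=1}^{𝔫} t_u = R and t_u ≤ a_{hu} for all u. -/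

import Mathlib

open scoped Classical

noncomputable section

namespace FlagC

variable {k V : Type*} [Field k] [AddCommGroup V] [Module k V]

/-- The orthogonal complement `{v | ∀ u ∈ N, Φ u v = 0}` of a submodule with respect to a
bilinear form. -/
def perpB (Φ : V →ₗ[k] V →ₗ[k] k) (N : Submodule k V) : Submodule k V where
  carrier := {v | ∀ u ∈ N, Φ u v = 0}
  zero_mem' := fun u _ => map_zero (Φ u)
  add_mem' := fun {a b} ha hb u hu => by rw [map_add, ha u hu, hb u hu, add_zero]
  smul_mem' := fun c v hv u hu => by rw [map_smul, hv u hu, smul_zero]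

/-- A complete isotropic flag of type `C`:  `0 = L 0 ⊆ L 1 ⊆ ⋯ ⊆ L nn = V` with
`L (nn - i) = (L i)^⊥`.  (The values `L i` for `i > nn` are required to equal `⊤` so that a
flag is determined by finitely many submodules.) -/
def IsFlag (Φ : V →ₗ[k] V →ₗ[k] k) (nn : ℕ) (L : ℕ → Submodule k V) : Prop :=
  L 0 = ⊥ ∧ (∀ i, L i ≤ L (i + 1)) ∧ (∀ i, nn ≤ i → L i = ⊤) ∧
    ∀ i, i ≤ nn → L (nn - i) = perpB Φ (L i)

/-- The set `X_c` of complete isotropic flags. -/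
def Flags (Φ : V →ₗ[k] V →ₗ[k] k) (nn : ℕ) := {L : ℕ → Submodule k V // IsFlag Φ nn L}

/-- `dim_k (p / s)`, the dimension of the quotient of `p` by `s ∩ p`. -/
def relDim (p s : Submodule k V) : ℕ :=
  Module.finrank k (↥p ⧸ (s.comap p.subtype))

/-- The characteristic function `e_A` of the orbit `O_A`: the set of pairs of flags `(L, L′)`
with `dim_k (Lᵢ ∩ L′ⱼ)/(L_{i-1} ∩ L′ⱼ + Lᵢ ∩ L′_{j-1}) = A i j` for all `1 ≤ i, j ≤ nn`. -/
def eMat (Φ : V →ₗ[k] V →ₗ[k] k) (nn : ℕ) (A : ℕ → ℕ → ℤ) :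
    Flags Φ nn × Flags Φ nn → ℚ := fun LL =>
  if ∀ i ∈ Finset.Icc 1 nn, ∀ j ∈ Finset.Icc 1 nn,
      (relDim ((LL.1.1 i) ⊓ (LL.2.1 j))
        (((LL.1.1 (i - 1)) ⊓ (LL.2.1 j)) ⊔ ((LL.1.1 i) ⊓ (LL.2.1 (j - 1)))) : ℤ) = A i j
  then 1 else 0

/-- Convolution product of functions on `X_c × X_c`. -/
def conv (Φ : V →ₗ[k] V →ₗ[k] k) (nn : ℕ)
    (f g : Flags Φ nn × Flags Φ nn → ℚ) : Flags Φ nn × Flags Φ nn → ℚ :=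
  fun LL => ∑ᶠ L' : Flags Φ nn, f (LL.1, L') * g (L', LL.2)

/-- Membership in `^cΞ`: an `nn × nn` matrix of natural numbers (recorded as an
integer-valued function on `[1,nn] × [1,nn]`) with total sum `2d` and with
`a_{ij} = a_{nn+1-i, nn+1-j}`. -/
def MemXiC (nn d : ℕ) (A : ℕ → ℕ → ℤ) : Prop :=
  (∀ i ∈ Finset.Icc 1 nn, ∀ j ∈ Finset.Icc 1 nn, 0 ≤ A i j) ∧
  (∑ i ∈ Finset.Icc 1 nn, ∑ j ∈ Finset.Icc 1 nn, A i j) = 2 * d ∧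
  ∀ i ∈ Finset.Icc 1 nn, ∀ j ∈ Finset.Icc 1 nn, A i j = A (nn + 1 - i) (nn + 1 - j)

/-- Row sums. -/
def roM (nn : ℕ) (A : ℕ → ℕ → ℤ) (i : ℕ) : ℤ := ∑ j ∈ Finset.Icc 1 nn, A i j

/-- Column sums. -/
def coM (nn : ℕ) (A : ℕ → ℕ → ℤ) (j : ℕ) : ℤ := ∑ i ∈ Finset.Icc 1 nn, A i j

/-- `E^θ_{ij} = E_{ij} + E_{nn+1-i, nn+1-j}`. -/
def Eth (nn i j : ℕ) : ℕ → ℕ → ℤ := fun a b =>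
  (if a = i ∧ b = j then 1 else 0) + (if a = nn + 1 - i ∧ b = nn + 1 - j then 1 else 0)

/-- The Gaussian binomial coefficient `[m; t]_q = ∏_{i=1}^{t} (q^{m-i+1} - 1)/(q^i - 1)`. -/
def qbinom (q : ℚ) (m : ℤ) (t : ℕ) : ℚ :=
  ∏ i ∈ Finset.Icc 1 t, (q ^ (m - (i : ℤ) + 1) - 1) / (q ^ (i : ℤ) - 1)

/-! ### Counting frames -/

/-- `v` is linearly independent modulo `F`. -/
def LIm (F : Submodule k V) {t : ℕ} (v : Fin t → V) : Prop :=
  ∀ c : Fin t → k, ∑ i, c i • v i ∈ F → ∀ i, c i = 0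

lemma LIm_iff (F : Submodule k V) {t : ℕ} (v : Fin t → V) :
    LIm F v ↔ LinearIndependent k (fun i => F.mkQ (v i)) := by
  rw [Fintype.linearIndependent_iff]
  unfold LIm
  refine forall_congr' fun c => ?_
  have : ∑ i, c i • F.mkQ (v i) = F.mkQ (∑ i, c i • v i) := by simp [map_sum]
  rw [this, Submodule.mkQ_apply, Submodule.Quotient.mk_eq_zero]

/-- Frames of `G` modulo `F`. -/
abbrev Fr (G F : Submodule k V) (t : ℕ) := {v : Fin t → V // (∀ i, v i ∈ G) ∧ LIm F v}

lemma card_sub [Fintype k] [FiniteDimensional k V] (F : Submodule k V) :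
    Nat.card F = Fintype.card k ^ Module.finrank k F := by
  have : Finite V := Module.finite_of_finite k
  have : Fintype F := Fintype.ofFinite F
  rw [Nat.card_eq_fintype_card, Module.card_eq_pow_finrank (K := k)]

lemma finrank_map_mkQ [FiniteDimensional k V] {F G : Submodule k V} (hFG : F ≤ G) :
    Module.finrank k (G.map F.mkQ) + Module.finrank k F = Module.finrank k G := by
  have h := LinearMap.finrank_range_add_finrank_ker (F.mkQ.domRestrict G)
  rw [LinearMap.range_domRestrict, LinearMap.ker_domRestrict, Submodule.ker_mkQ] at h
  have e : Module.finrank k (Submodule.comap G.subtype F) = Module.finrank k F :=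
    (Submodule.comapSubtypeEquivOfLe hFG).finrank_eq
  have h2 : Module.finrank k (Submodule.submoduleOf F G) = Module.finrank k F := e
  omega

lemma card_Fr [Fintype k] [FiniteDimensional k V] {F G : Submodule k V} (hFG : F ≤ G) (t : ℕ)
    (ht : Module.finrank k F + t ≤ Module.finrank k G) :
    Nat.card (Fr G F t) = (∏ i : Fin t, (Fintype.card k ^
        (Module.finrank k G - Module.finrank k F) - Fintype.card k ^ i.val)) *
      (Fintype.card k ^ Module.finrank k F) ^ t := by
  have : Finite V := Module.finite_of_finite k
  obtain ⟨s, hs⟩ := F.mkQ.exists_rightInverse_of_surjective (Submodule.range_mkQ F)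
  have hs' : ∀ x, F.mkQ (s x) = x := fun x => by
    have := congrArg (fun f => f x) hs
    simpa using this
  have hr := finrank_map_mkQ hFG
  have hfin : Finite (G.map F.mkQ) := Module.finite_of_finite k
  have e : Fr G F t ≃ {w : Fin t → (G.map F.mkQ) // LinearIndependent k w} × (Fin t → F) :=
    { toFun := fun v => (⟨fun i => ⟨F.mkQ (v.1 i), Submodule.mem_map_of_mem (v.2.1 i)⟩, by
          have := (LIm_iff F v.1).1 v.2.2
          exact LinearIndependent.of_comp (G.map F.mkQ).subtype this⟩,
        fun i => ⟨v.1 i - s (F.mkQ (v.1 i)), by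
          rw [← Submodule.Quotient.mk_eq_zero, ← Submodule.mkQ_apply, map_sub, hs', sub_self]⟩)
      invFun := fun p => ⟨fun i => s (p.1.1 i).1 + (p.2 i).1, by
        have hq : ∀ i, F.mkQ (s (p.1.1 i).1 + (p.2 i).1) = (p.1.1 i).1 := fun i => by
          rw [map_add, hs', Submodule.mkQ_apply,
            (Submodule.Quotient.mk_eq_zero F).2 (p.2 i).2, add_zero]
        constructor
        · intro i
          have h1 : s (p.1.1 i).1 + (p.2 i).1 ∈ (G.map F.mkQ).comap F.mkQ := by
            rw [Submodule.mem_comap, hq]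
            exact (p.1.1 i).2
          rwa [Submodule.comap_map_mkQ, sup_eq_right.2 hFG] at h1
        · rw [LIm_iff]
          simp only [hq]
          exact p.1.2.map' (G.map F.mkQ).subtype (Submodule.ker_subtype _)⟩
      left_inv := fun v => by
        apply Subtype.ext
        funext i
        simp
      right_inv := fun p => by
        have hq : ∀ i, F.mkQ (s (p.1.1 i).1 + (p.2 i).1) = (p.1.1 i).1 := fun i => by
          rw [map_add, hs', Submodule.mkQ_apply,
            (Submodule.Quotient.mk_eq_zero F).2 (p.2 i).2, add_zero]
        apply Prod.ext
        · apply Subtype.ext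
          funext i
          apply Subtype.ext
          exact hq i
        · funext i
          apply Subtype.ext
          simp only [hq]
          simp }
  rw [Nat.card_congr e, Nat.card_prod, card_linearIndependent (by omega), Nat.card_fun,
    card_sub, Nat.card_fin]
  have : Module.finrank k (G.map F.mkQ) = Module.finrank k G - Module.finrank k F := by omega
  rw [this]

lemma exists_coeff {t : ℕ} (T0 : Submodule k V) (v : Fin t → V) {x : V}
    (hx : x ∈ T0 ⊔ Submodule.span k (Set.range v)) :
    ∃ a ∈ T0, ∃ c : Fin t → k, x = a + ∑ i, c i • v i := by
  obtain ⟨a, ha, b, hb, rfl⟩ := Submodule.mem_sup.1 hx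
  obtain ⟨c, rfl⟩ := (Submodule.mem_span_range_iff_exists_fun k).1 hb
  exact ⟨a, ha, c, rfl⟩

lemma finrank_frame [FiniteDimensional k V] {t : ℕ} {T0 F : Submodule k V} (h : T0 ≤ F)
    {v : Fin t → V} (hv : LIm F v) :
    (T0 ⊔ Submodule.span k (Set.range v)) ⊓ F = T0 ∧
    Module.finrank k (T0 ⊔ Submodule.span k (Set.range v) : Submodule k V)
      = Module.finrank k T0 + t := by
  have h1 : (T0 ⊔ Submodule.span k (Set.range v)) ⊓ F = T0 := by
    apply le_antisymm
    · rintro x ⟨hx, hxF⟩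
      obtain ⟨a, ha, c, rfl⟩ := exists_coeff T0 v hx
      have hc := hv c (by simpa using F.sub_mem hxF (h ha))
      simpa [hc] using ha
    · exact le_inf le_sup_left h
  refine ⟨h1, ?_⟩
  have hli : LinearIndependent k v :=
    LinearIndependent.of_comp F.mkQ ((LIm_iff F v).1 hv)
  have h2 := Submodule.finrank_sup_add_finrank_inf_eq T0 (Submodule.span k (Set.range v))
  have h3 : T0 ⊓ Submodule.span k (Set.range v) = ⊥ := by
    rw [eq_bot_iff]
    rintro x ⟨hx, hxs⟩
    obtain ⟨c, rfl⟩ := (Submodule.mem_span_range_iff_exists_fun k).1 hxs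
    have hc := hv c (h hx)
    simp [hc]
  rw [h3, finrank_bot, finrank_span_eq_card hli, Fintype.card_fin] at h2
  simpa using h2

/-- Extensions of `T0` inside `G` of dimension `t` more, meeting `F` in `T0`. -/
abbrev Ext (G F T0 : Submodule k V) (t : ℕ) :=
  {T : Submodule k V // T ≤ G ∧ T ⊓ F = T0 ∧ Module.finrank k T = Module.finrank k T0 + t}

lemma card_Ext_mul [Fintype k] [FiniteDimensional k V] {F G T0 : Submodule k V} (h0 : T0 ≤ F)
    (hFG : F ≤ G) (t : ℕ) :
    Nat.card (Fr G F t) = Nat.card (Ext G F T0 t) * ((∏ i : Fin t, (Fintype.card k ^ t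
       - Fintype.card k ^ i.val)) * (Fintype.card k ^ Module.finrank k T0) ^ t) := by
  have : Finite V := Module.finite_of_finite k
  have : Finite (Submodule k V) := Finite.of_injective _ SetLike.coe_injective
  have : Finite (Fr G F t) := Subtype.finite
  have : Finite (Ext G F T0 t) := Subtype.finite
  have : Fintype (Ext G F T0 t) := Fintype.ofFinite _
  let f : Fr G F t → Ext G F T0 t := fun v =>
    ⟨T0 ⊔ Submodule.span k (Set.range v.1), by
      refine ⟨sup_le (h0.trans hFG) ?_, finrank_frame h0 v.2.2⟩
      rw [Submodule.span_le]
      rintro _ ⟨i, rfl⟩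
      exact v.2.1 i⟩
  rw [Nat.card_congr (Equiv.sigmaFiberEquiv f).symm, Nat.card_sigma]
  have key : ∀ T : Ext G F T0 t, Nat.card {v // f v = T} = (∏ i : Fin t, (Fintype.card k ^ t
       - Fintype.card k ^ i.val)) * (Fintype.card k ^ Module.finrank k T0) ^ t := by
    intro T
    have hT0 : T0 ≤ T.1 := by
      exact T.2.2.1.symm.le.trans inf_le_left
    have e : {v // f v = T} ≃ Fr T.1 T0 t :=
      { toFun := fun v => ⟨v.1.1, by
          constructor
          · intro i
            have h1 : T.1 = T0 ⊔ Submodule.span k (Set.range v.1.1) := by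
              exact (congrArg Subtype.val v.2).symm
            rw [h1]
            exact Submodule.mem_sup_right (Submodule.subset_span ⟨i, rfl⟩)
          · intro c hc
            exact v.1.2.2 c (h0 hc)⟩
        invFun := fun v => ⟨⟨v.1, by
            constructor
            · intro i
              exact T.2.1 (v.2.1 i)
            · intro c hc
              apply v.2.2 c
              exact T.2.2.1.le ⟨Submodule.sum_mem _ fun i _ => Submodule.smul_mem _ _ (v.2.1 i), hc⟩⟩, by
          apply Subtype.ext
          apply Submodule.eq_of_le_of_finrank_eq
          · refine sup_le hT0 ?_
            rw [Submodule.span_le]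
            rintro _ ⟨i, rfl⟩
            exact v.2.1 i
          · exact (finrank_frame le_rfl v.2.2).2.trans T.2.2.2.symm⟩
        left_inv := fun v => rfl
        right_inv := fun v => rfl }
    rw [Nat.card_congr e, card_Fr hT0 t (le_of_eq T.2.2.2.symm), T.2.2.2, Nat.add_sub_cancel_left]
  rw [Finset.sum_congr rfl (fun T _ => key T), Finset.sum_const, Finset.card_univ,
    Nat.card_eq_fintype_card, smul_eq_mul]

lemma prod_sub_eq (q : ℚ) (hq : 1 < q) (b t : ℕ) (hbt : t ≤ b) :
    (∏ i : Fin t, (q ^ b - q ^ i.val)) =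
      qbinom q b t * ∏ i : Fin t, (q ^ t - q ^ i.val) := by
  have h0 : q ≠ 0 := by positivity
  have e1 : ∀ c, t ≤ c → (∏ i : Fin t, (q ^ c - q ^ i.val)) =
      (∏ i ∈ Finset.range t, q ^ i) * ∏ i ∈ Finset.range t, (q ^ (c - i) - 1) := by
    intro c hc
    rw [Fin.prod_univ_eq_prod_range (fun i => q ^ c - q ^ i), ← Finset.prod_mul_distrib]
    refine Finset.prod_congr rfl fun i hi => ?_
    have : i < t := Finset.mem_range.1 hi
    rw [mul_sub, ← pow_add, mul_one]
    congr 2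
    omega
  rw [e1 b hbt, e1 t le_rfl]
  have e2 : ∏ i ∈ Finset.range t, (q ^ (t - i) - 1) = ∏ i ∈ Finset.Icc 1 t, (q ^ (i : ℤ) - 1) := by
    rw [← Finset.prod_range_reflect, Finset.range_eq_Ico, Finset.prod_Ico_eq_prod_range]
    rw [show Finset.Icc 1 t = Finset.Ico 1 (t + 1) by ext; simp,
      Finset.prod_Ico_eq_prod_range]
    refine Finset.prod_congr (by simp) fun i hi => ?_
    have : i < t := by simpa using hi
    rw [zpow_natCast]
    congr 2
    omega
  have e3 : ∏ i ∈ Finset.range t, (q ^ (b - i) - 1)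
      = ∏ i ∈ Finset.Icc 1 t, (q ^ ((b : ℤ) - (i : ℤ) + 1) - 1) := by
    rw [show Finset.Icc 1 t = Finset.Ico 1 (t + 1) by ext; simp,
      Finset.prod_Ico_eq_prod_range]
    refine Finset.prod_congr (by simp) fun i hi => ?_
    have : i < t := by simpa using hi
    rw [← zpow_natCast]
    congr 2
    omega
  have e4 : ∏ i ∈ Finset.Icc 1 t, (q ^ (i : ℤ) - 1) ≠ 0 := by
    rw [Finset.prod_ne_zero_iff]
    intro i hi
    have : 1 ≤ i := (Finset.mem_Icc.1 hi).1
    rw [zpow_natCast]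
    have := one_lt_pow₀ hq (show i ≠ 0 by omega)
    linarith
  unfold qbinom
  rw [e2, e3, Finset.prod_div_distrib]
  field_simp

lemma card_Ext [Fintype k] [FiniteDimensional k V] {F G T0 : Submodule k V} (h0 : T0 ≤ F)
    (hFG : F ≤ G) (t : ℕ) (ht : Module.finrank k F + t ≤ Module.finrank k G) :
    (Nat.card (Ext G F T0 t) : ℚ) =
      qbinom (Fintype.card k) ((Module.finrank k G : ℤ) - Module.finrank k F) t *
      (Fintype.card k : ℚ) ^ (((Module.finrank k F : ℤ) - Module.finrank k T0) * t) := by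
  have hq : (1 : ℚ) < Fintype.card k := by exact_mod_cast Fintype.one_lt_card
  have hq1 : 1 ≤ Fintype.card k := Fintype.card_pos
  have h1 := card_Ext_mul h0 hFG t
  rw [card_Fr hFG t ht] at h1
  have h2 := congrArg (fun n : ℕ => (n : ℚ)) h1
  have hc : ∀ c, t ≤ c → ((∏ i : Fin t, (Fintype.card k ^ c - Fintype.card k ^ i.val) : ℕ) : ℚ)
      = ∏ i : Fin t, ((Fintype.card k : ℚ) ^ c - (Fintype.card k : ℚ) ^ i.val) := by
    intro c hc
    rw [Nat.cast_prod]
    refine Finset.prod_congr rfl fun i _ => ?_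
    rw [Nat.cast_sub (Nat.pow_le_pow_right hq1 (by omega))]
    push_cast
    rfl
  have hle : Module.finrank k T0 ≤ Module.finrank k F := Submodule.finrank_mono h0
  have hfg : Module.finrank k F ≤ Module.finrank k G := Submodule.finrank_mono hFG
  simp only [Nat.cast_mul] at h2
  rw [hc _ (by omega), hc _ le_rfl, prod_sub_eq _ hq _ _ (by omega)] at h2
  have hne : ∏ i : Fin t, ((Fintype.card k : ℚ) ^ t - (Fintype.card k : ℚ) ^ i.val) ≠ 0 := by
    rw [Finset.prod_ne_zero_iff]
    intro i _
    have := pow_lt_pow_right₀ hq i.2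
    linarith
  have hq0 : (Fintype.card k : ℚ) ≠ 0 := by positivity
  rw [Nat.cast_sub hfg] at h2
  have e : (Fintype.card k : ℚ) ^ (((Module.finrank k F : ℤ) - Module.finrank k T0) * t)
      * ((Fintype.card k : ℚ) ^ Module.finrank k T0) ^ t
      = ((Fintype.card k : ℚ) ^ Module.finrank k F) ^ t := by
    rw [← pow_mul, ← pow_mul, ← zpow_natCast, ← zpow_natCast, ← zpow_add₀ hq0]
    congr 1
    push_cast
    ring
  have hne2 : ((Fintype.card k : ℚ) ^ Module.finrank k T0) ^ t ≠ 0 := by positivity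
  push_cast at h2
  rw [← e] at h2
  apply mul_right_cancel₀ (mul_ne_zero hne hne2)
  rw [← h2]
  ring

/-! ### Counting subspaces in given position with respect to a chain -/

/-- Subspaces with prescribed intersection dimensions with a chain. -/
abbrev Chn (G : ℕ → Submodule k V) (s : ℕ → ℕ) (n : ℕ) :=
  {T : Submodule k V // T ≤ G n ∧ ∀ u, u ≤ n → Module.finrank k (T ⊓ G u : Submodule k V) = s u}

lemma card_Chn [Fintype k] [FiniteDimensional k V] (G : ℕ → Submodule k V)
    (hmono : ∀ i, G i ≤ G (i + 1)) (t s : ℕ → ℕ)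
    (hs0 : s 0 = Module.finrank k (G 0))
    (hs : ∀ u, s (u + 1) = s u + t (u + 1)) (n : ℕ)
    (ht : ∀ u, u < n → Module.finrank k (G u) + t (u + 1) ≤ Module.finrank k (G (u + 1))) :
    (Nat.card (Chn G s n) : ℚ) = ∏ u ∈ Finset.range n,
      (qbinom (Fintype.card k) ((Module.finrank k (G (u + 1)) : ℤ) - Module.finrank k (G u))
          (t (u + 1)) *
        (Fintype.card k : ℚ) ^ (((Module.finrank k (G u) : ℤ) - s u) * t (u + 1))) := by
  have : Finite V := Module.finite_of_finite k
  have : Finite (Submodule k V) := Finite.of_injective _ SetLike.coe_injective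
  have hm : Monotone G := monotone_nat_of_le_succ hmono
  induction n with
  | zero =>
    simp only [Finset.range_zero, Finset.prod_empty]
    have e : Nat.card (Chn G s 0) = 1 := by
      rw [Nat.card_eq_one_iff_unique]
      constructor
      · constructor
        have key : ∀ T : Chn G s 0, T.1 = G 0 := by
          intro T
          apply Submodule.eq_of_le_of_finrank_eq T.2.1
          rw [← hs0, ← T.2.2 0 le_rfl, inf_eq_left.2 T.2.1]
        intro T T'
        exact Subtype.ext ((key T).trans (key T').symm)
      · exact ⟨⟨G 0, le_rfl, fun u hu => by
          obtain rfl : u = 0 := by omega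
          rw [inf_idem, hs0]⟩⟩
    rw [e, Nat.cast_one]
  | succ n ih =>
    have ih := ih (fun u hu => ht u (by omega))
    rw [Finset.prod_range_succ, ← ih]
    have : Finite (Chn G s n) := Subtype.finite
    have : Finite (Chn G s (n + 1)) := Subtype.finite
    have : Fintype (Chn G s n) := Fintype.ofFinite _
    let f : Chn G s (n + 1) → Chn G s n := fun T => ⟨T.1 ⊓ G n, inf_le_right, fun u hu => by
      rw [inf_assoc, inf_eq_right.2 (hm hu)]
      exact T.2.2 u (by omega)⟩
    rw [Nat.card_congr (Equiv.sigmaFiberEquiv f).symm, Nat.card_sigma]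
    have key : ∀ T0 : Chn G s n, (Nat.card {T // f T = T0} : ℚ) =
        (qbinom (Fintype.card k) ((Module.finrank k (G (n + 1)) : ℤ) - Module.finrank k (G n))
          (t (n + 1)) *
        (Fintype.card k : ℚ) ^ (((Module.finrank k (G n) : ℤ) - s n) * t (n + 1))) := by
      intro T0
      have hd0 : Module.finrank k T0.1 = s n := by
        have := T0.2.2 n le_rfl
        rwa [inf_eq_left.2 T0.2.1] at this
      have e : {T // f T = T0} ≃ Ext (G (n + 1)) (G n) T0.1 (t (n + 1)) :=
        { toFun := fun T => ⟨T.1.1, T.1.2.1, congrArg Subtype.val T.2, by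
            have := T.1.2.2 (n + 1) le_rfl
            rw [inf_eq_left.2 T.1.2.1] at this
            rw [this, hd0, hs]⟩
          invFun := fun T => ⟨⟨T.1, T.2.1, fun u hu => by
            rcases Nat.lt_or_ge n u with h | h
            · obtain rfl : u = n + 1 := by omega
              rw [inf_eq_left.2 T.2.1, T.2.2.2, hd0, hs]
            · have h1 : T.1 ⊓ G u = T0.1 ⊓ G u := by
                calc T.1 ⊓ G u = T.1 ⊓ (G n ⊓ G u) := by rw [inf_eq_right.2 (hm h)]
                  _ = (T.1 ⊓ G n) ⊓ G u := (inf_assoc _ _ _).symm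
                  _ = T0.1 ⊓ G u := congrArg (· ⊓ G u) T.2.2.1
              rw [h1]
              exact T0.2.2 u h⟩, Subtype.ext T.2.2.1⟩
          left_inv := fun T => rfl
          right_inv := fun T => rfl }
      rw [Nat.card_congr e, card_Ext T0.2.1 (hmono n) _ (ht n (by omega)), hd0]
    rw [Nat.cast_sum, Finset.sum_congr rfl (fun T _ => key T), Finset.sum_const,
      Finset.card_univ, Nat.card_eq_fintype_card, nsmul_eq_mul]

/-- Dimension as an integer. -/
def dm (N : Submodule k V) : ℤ := (Module.finrank k N : ℤ)

lemma dm_sup_inf [FiniteDimensional k V] (M N : Submodule k V) :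
    dm (M ⊔ N) + dm (M ⊓ N) = dm M + dm N := by
  unfold dm
  exact_mod_cast Submodule.finrank_sup_add_finrank_inf_eq M N

lemma dm_mono [FiniteDimensional k V] {M N : Submodule k V} (h : M ≤ N) : dm M ≤ dm N := by
  unfold dm
  exact_mod_cast Submodule.finrank_mono h

lemma relDim_of_le [FiniteDimensional k V] {p s : Submodule k V} (h : s ≤ p) :
    (relDim p s : ℤ) = dm p - dm s := by
  unfold relDim dm
  have h1 := Submodule.finrank_quotient_add_finrank (s.comap p.subtype)
  have h2 : Module.finrank k (s.comap p.subtype) = Module.finrank k s :=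
    (Submodule.comapSubtypeEquivOfLe h).finrank_eq
  omega

/-- The relative position entry for `P ≤ Q`, `F ≤ F'`. -/
lemma relDim_pos [FiniteDimensional k V] {P Q F F' : Submodule k V} (hPQ : P ≤ Q) (hF : F ≤ F') :
    (relDim (Q ⊓ F') ((P ⊓ F') ⊔ (Q ⊓ F)) : ℤ) =
      dm (Q ⊓ F') - dm (P ⊓ F') - dm (Q ⊓ F) + dm (P ⊓ F) := by
  rw [relDim_of_le (sup_le (inf_le_inf_right _ hPQ) (inf_le_inf_left _ hF))]
  have := dm_sup_inf (P ⊓ F') (Q ⊓ F)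
  have e : (P ⊓ F') ⊓ (Q ⊓ F) = P ⊓ F := by
    apply le_antisymm
    · exact le_inf (inf_le_left.trans inf_le_left) (inf_le_right.trans inf_le_right)
    · exact le_inf (inf_le_inf_left _ hF) (inf_le_inf_right _ hPQ)
  rw [e] at this
  linarith

lemma zpow_sum_range {q : ℚ} (hq : q ≠ 0) (f : ℕ → ℤ) (n : ℕ) :
    ∏ u ∈ Finset.range n, q ^ f u = q ^ ∑ u ∈ Finset.range n, f u := by
  induction n with
  | zero => simp
  | succ m ih => rw [Finset.prod_range_succ, Finset.sum_range_succ, zpow_add₀ hq, ih]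

/-- Counting `T` between `P` and `Q` in given position w.r.t. a flag `F`. -/
lemma card_between [Fintype k] [FiniteDimensional k V] (P Q : Submodule k V) (hPQ : P ≤ Q)
    (F : ℕ → Submodule k V) (n : ℕ) (hF0 : F 0 = ⊥) (hmono : ∀ i, F i ≤ F (i + 1))
    (hFn : F n = ⊤) (t : ℕ → ℕ) (a : ℕ → ℤ) (ha : ∀ u ∈ Finset.Icc 1 n, 0 ≤ a u)
    (hab : ∀ u ∈ Finset.Icc 1 n, dm (Q ⊓ F u) - dm (P ⊓ F u) - dm (Q ⊓ F (u - 1))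
      + dm (P ⊓ F (u - 1)) = a u + t u) :
    (Nat.card {T : Submodule k V // P ≤ T ∧ T ≤ Q ∧ ∀ u ∈ Finset.Icc 1 n,
        dm (T ⊓ F u) - dm (P ⊓ F u) - dm (T ⊓ F (u - 1)) + dm (P ⊓ F (u - 1)) = t u} : ℚ) =
      (Fintype.card k : ℚ) ^ (∑ j ∈ Finset.Icc 1 n, ∑ u ∈ Finset.Icc 1 n,
                if j < u then a j * (t u : ℤ) else 0) *
      ∏ u ∈ Finset.Icc 1 n, qbinom (Fintype.card k : ℚ) (a u + (t u : ℤ)) (t u) := by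
  have hq0 : (Fintype.card k : ℚ) ≠ 0 := by
    have : 0 < Fintype.card k := Fintype.card_pos
    positivity
  set G : ℕ → Submodule k V := fun u => P ⊔ (Q ⊓ F u) with hG
  have hGmono : ∀ i, G i ≤ G (i + 1) := fun i => sup_le_sup_left (inf_le_inf_left _ (hmono i)) _
  have hG0 : G 0 = P := by simp [hG, hF0]
  have hGn : G n = Q := by simp [hG, hFn, hPQ]
  -- dimension of `T ⊓ G u`
  have hTG : ∀ T, P ≤ T → T ≤ Q → ∀ u, dm (T ⊓ G u) = dm P + dm (T ⊓ F u) - dm (P ⊓ F u) := by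
    intro T h1 h2 u
    have e : T ⊓ G u = P ⊔ (T ⊓ F u) := by
      rw [hG]
      simp only
      rw [inf_comm, sup_inf_assoc_of_le _ h1, inf_right_comm, inf_eq_right.2 h2]
    rw [e]
    have := dm_sup_inf P (T ⊓ F u)
    have e2 : P ⊓ (T ⊓ F u) = P ⊓ F u := by rw [← inf_assoc, inf_eq_left.2 h1]
    rw [e2] at this
    linarith
  have hGd : ∀ u, dm (G u) = dm P + dm (Q ⊓ F u) - dm (P ⊓ F u) := by
    intro u
    rw [← hTG Q hPQ le_rfl u]
    have : G u ≤ Q := sup_le hPQ inf_le_left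
    rw [inf_eq_right.2 this]
  have hGstep : ∀ u, u < n → dm (G (u + 1)) - dm (G u) = a (u + 1) + t (u + 1) := by
    intro u hu
    have := hab (u + 1) (Finset.mem_Icc.2 ⟨by omega, by omega⟩)
    rw [Nat.add_sub_cancel] at this
    rw [hGd, hGd]
    linarith
  set s : ℕ → ℕ := fun u => Module.finrank k P + ∑ v ∈ Finset.range u, t (v + 1) with hs
  have hs0 : s 0 = Module.finrank k (G 0) := by rw [hG0]; simp [hs]
  have hss : ∀ u, s (u + 1) = s u + t (u + 1) := by
    intro u
    simp only [hs]
    rw [Finset.sum_range_succ]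
    ring
  have hGs : ∀ u, u ≤ n → dm (G u) - s u = ∑ j ∈ Finset.range u, a (j + 1) := by
    intro u
    induction u with
    | zero =>
      intro _
      rw [hs0]
      simp [dm]
    | succ u ih =>
      intro hu
      rw [Finset.sum_range_succ, ← ih (by omega), hss]
      have := hGstep u (by omega)
      push_cast
      linarith
  have hcount := card_Chn G hGmono t s hs0 hss n (by
    intro u hu
    have h1 := hGstep u hu
    have h2 := ha (u + 1) (Finset.mem_Icc.2 ⟨by omega, by omega⟩)
    unfold dm at h1
    omega)
  have e : {T : Submodule k V // P ≤ T ∧ T ≤ Q ∧ ∀ u ∈ Finset.Icc 1 n,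
        dm (T ⊓ F u) - dm (P ⊓ F u) - dm (T ⊓ F (u - 1)) + dm (P ⊓ F (u - 1)) = t u}
      ≃ Chn G s n := by
    apply Equiv.subtypeEquivRight
    intro T
    constructor
    · rintro ⟨h1, h2, h3⟩
      refine ⟨hGn ▸ h2, ?_⟩
      intro u
      induction u with
      | zero =>
        intro _
        rw [hG0, inf_eq_right.2 h1, hs0, hG0]
      | succ u ih =>
        intro hu
        have i1 := ih (by omega)
        have i2 := h3 (u + 1) (Finset.mem_Icc.2 ⟨by omega, by omega⟩)
        rw [Nat.add_sub_cancel] at i2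
        have j1 := hTG T h1 h2 u
        have j2 := hTG T h1 h2 (u + 1)
        rw [hss]
        unfold dm at *
        omega
    · rintro ⟨h1, h2⟩
      rw [hGn] at h1
      have hP : P ≤ T := by
        have := h2 0 (by omega)
        rw [hs0, hG0] at this
        have h3 := Submodule.eq_of_le_of_finrank_eq (inf_le_right : T ⊓ P ≤ P) this
        exact inf_eq_right.1 h3
      refine ⟨hP, h1, ?_⟩
      intro u hu
      obtain ⟨hu1, hu2⟩ := Finset.mem_Icc.1 hu
      obtain ⟨u, rfl⟩ : ∃ w, u = w + 1 := ⟨u - 1, by omega⟩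
      rw [Nat.add_sub_cancel]
      have j1 := hTG T hP h1 u
      have j2 := hTG T hP h1 (u + 1)
      have i1 := h2 u (by omega)
      have i2 := h2 (u + 1) (by omega)
      rw [hss] at i2
      unfold dm at *
      omega
  rw [Nat.card_congr e, hcount, Finset.prod_mul_distrib, mul_comm]
  have hIcc : Finset.Icc 1 n = Finset.Ico 1 (n + 1) := by ext; simp
  have hprod : ∀ f : ℕ → ℚ, ∏ u ∈ Finset.Icc 1 n, f u = ∏ u ∈ Finset.range n, f (u + 1) := by
    intro f
    rw [hIcc, Finset.prod_Ico_eq_prod_range]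
    simp [add_comm]
  have hsum : ∀ (m : ℕ) (f : ℕ → ℤ),
      ∑ u ∈ Finset.Icc 1 m, f u = ∑ u ∈ Finset.range m, f (u + 1) := by
    intro m f
    rw [show Finset.Icc 1 m = Finset.Ico 1 (m + 1) by ext; simp, Finset.sum_Ico_eq_sum_range]
    simp [add_comm]
  congr 1
  · have hz : ∀ f : ℕ → ℤ, ∏ u ∈ Finset.range n, (Fintype.card k : ℚ) ^ f u
        = (Fintype.card k : ℚ) ^ ∑ u ∈ Finset.range n, f u := by
      intro f
      exact zpow_sum_range hq0 f n
    rw [hz]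
    congr 1
    rw [Finset.sum_comm, hsum]
    refine Finset.sum_congr rfl fun u hu => ?_
    have hu' : u < n := Finset.mem_range.1 hu
    have := hGs u hu'.le
    unfold dm at this
    rw [this, hsum, Finset.sum_mul]
    have hsub : Finset.range u ⊆ Finset.range n := Finset.range_subset_range.2 hu'.le
    rw [← Finset.sum_subset hsub]
    · refine Finset.sum_congr rfl fun j hj => ?_
      have : j < u := Finset.mem_range.1 hj
      rw [if_pos (by omega)]
    · intro j _ hj
      have : ¬ j < u := fun h => hj (Finset.mem_range.2 h)
      rw [if_neg (by omega)]
  · rw [hprod]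
    refine Finset.prod_congr rfl fun u hu => ?_
    have := hGstep u (Finset.mem_range.1 hu)
    unfold dm at this
    rw [this]

/-! ### Relative position matrices -/

/-- The matrix of relative position of two sequences of submodules. -/
def mt (L L' : ℕ → Submodule k V) (i j : ℕ) : ℤ :=
  dm (L i ⊓ L' j) - dm (L (i - 1) ⊓ L' j) - dm (L i ⊓ L' (j - 1)) + dm (L (i - 1) ⊓ L' (j - 1))

lemma mt_comm (L L' : ℕ → Submodule k V) (i j : ℕ) : mt L L' i j = mt L' L j i := by
  unfold mt
  rw [inf_comm (L i), inf_comm (L (i - 1)), inf_comm (L i), inf_comm (L (i - 1))]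
  ring

section flags

variable {Φ : V →ₗ[k] V →ₗ[k] k} {n : ℕ}

lemma IsFlag.mono {L : ℕ → Submodule k V} (hL : IsFlag Φ n L) : Monotone L :=
  monotone_nat_of_le_succ hL.2.1

lemma eMat_eq [FiniteDimensional k V] (A : ℕ → ℕ → ℤ) (L L' : Flags Φ n) :
    eMat Φ n A (L, L') =
      if ∀ i ∈ Finset.Icc 1 n, ∀ j ∈ Finset.Icc 1 n, mt L.1 L'.1 i j = A i j then 1 else 0 := by
  have e : ∀ i j, (relDim ((L.1 i) ⊓ (L'.1 j))
        (((L.1 (i - 1)) ⊓ (L'.1 j)) ⊔ ((L.1 i) ⊓ (L'.1 (j - 1)))) : ℤ) = mt L.1 L'.1 i j := by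
    intro i j
    rw [relDim_pos (L.2.mono (Nat.sub_le i 1)) (L'.2.mono (Nat.sub_le j 1))]
    rfl
  by_cases hc : ∀ i ∈ Finset.Icc 1 n, ∀ j ∈ Finset.Icc 1 n, mt L.1 L'.1 i j = A i j
  · rw [if_pos hc]
    exact if_pos (fun i hi j hj => (e i j).trans (hc i hi j hj))
  · rw [if_neg hc]
    exact if_neg (fun h => hc fun i hi j hj => (e i j).symm.trans (h i hi j hj))

lemma mt_nonneg [FiniteDimensional k V] {L L' : ℕ → Submodule k V} (hL : Monotone L)
    (hL' : Monotone L') (i j : ℕ) : 0 ≤ mt L L' i j := by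
  have := relDim_pos (hL (Nat.sub_le i 1)) (hL' (Nat.sub_le j 1))
  unfold mt
  rw [← this]
  positivity

lemma sum_tele (f : ℕ → ℤ) (m : ℕ) : ∑ j ∈ Finset.Icc 1 m, (f j - f (j - 1)) = f m - f 0 := by
  induction m with
  | zero => simp
  | succ m ih =>
    rw [Finset.sum_Icc_succ_top (by omega), ih, Nat.add_sub_cancel]
    ring

lemma mt_rowsum {L L' : ℕ → Submodule k V} (hL' : IsFlag Φ n L') (i : ℕ) :
    ∑ j ∈ Finset.Icc 1 n, mt L L' i j = dm (L i) - dm (L (i - 1)) := by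
  have := sum_tele (fun j => dm (L i ⊓ L' j) - dm (L (i - 1) ⊓ L' j)) n
  simp only [hL'.1, hL'.2.2.1 n le_rfl, inf_top_eq, inf_bot_eq, sub_self, sub_zero] at this
  rw [← this]
  refine Finset.sum_congr rfl fun j _ => ?_
  unfold mt
  ring

lemma mt_colsum {L L' : ℕ → Submodule k V} (hL : IsFlag Φ n L) (j : ℕ) :
    ∑ i ∈ Finset.Icc 1 n, mt L L' i j = dm (L' j) - dm (L' (j - 1)) := by
  rw [← mt_rowsum hL]
  exact Finset.sum_congr rfl fun i _ => mt_comm _ _ _ _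

lemma le_of_mt_zero [FiniteDimensional k V] {L L' : ℕ → Submodule k V} (hL : IsFlag Φ n L)
    (hL' : IsFlag Φ n L') (i : ℕ)
    (h0 : ∀ a b, 1 ≤ a → a ≤ i → i < b → b ≤ n → mt L L' a b = 0) : L i ≤ L' i := by
  have key : ∀ b, b ≤ n → ∀ a, a ≤ i → L a ⊓ L' b ≤ L' i := by
    intro b
    induction b with
    | zero =>
      intro _ a _
      rw [hL'.1, inf_bot_eq]
      exact bot_le
    | succ b ihb =>
      intro hb a
      induction a with
      | zero =>
        intro _
        rw [hL.1, bot_inf_eq]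
        exact bot_le
      | succ a iha =>
        intro ha
        rcases Nat.lt_or_ge i (b + 1) with h | h
        · have h1 := h0 (a + 1) (b + 1) (by omega) ha h hb
          have hle1 := hL.2.1 a
          have hle2 := hL'.2.1 b
          have h2 := relDim_pos hle1 hle2
          have hs : (L a ⊓ L' (b + 1)) ⊔ (L (a + 1) ⊓ L' b) ≤ L (a + 1) ⊓ L' (b + 1) :=
            sup_le (inf_le_inf_right _ hle1) (inf_le_inf_left _ hle2)
          have h3 := relDim_of_le hs
          unfold mt at h1
          simp only [Nat.add_sub_cancel] at h1
          rw [h2, h1] at h3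
          have h4 := Submodule.eq_of_le_of_finrank_eq hs (by unfold dm at h3; omega)
          rw [← h4]
          exact sup_le (iha (by omega)) (ihb (by omega) _ ha)
        · exact inf_le_right.trans (hL'.mono h)
  have := key n le_rfl i le_rfl
  rwa [hL'.2.2.1 n le_rfl, inf_top_eq] at this

/-! ### The symplectic form -/

/-- Hypotheses on the form. -/
def GoodForm (Φ : V →ₗ[k] V →ₗ[k] k) : Prop :=
  (∀ v : V, Φ v v = 0) ∧ (∀ v : V, (∀ w : V, Φ v w = 0) → v = 0)

lemma GoodForm.antisymm (hΦ : GoodForm Φ) (x y : V) : Φ x y = - Φ y x := by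
  have h := hΦ.1 (x + y)
  simp only [map_add, LinearMap.add_apply, hΦ.1, zero_add, add_zero] at h
  exact eq_neg_of_add_eq_zero_right h

lemma perpB_eq (Φ : V →ₗ[k] V →ₗ[k] k) (N : Submodule k V) :
    perpB Φ N = LinearMap.BilinForm.orthogonal Φ N := by
  ext v
  rfl

lemma GoodForm.refl (hΦ : GoodForm Φ) : LinearMap.BilinForm.IsRefl Φ := by
  intro x y h
  rw [hΦ.antisymm, h, neg_zero]

lemma GoodForm.nondeg (hΦ : GoodForm Φ) : LinearMap.BilinForm.Nondegenerate Φ := by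
  constructor
  · intro v hv
    exact hΦ.2 v hv
  · intro v hv
    apply hΦ.2 v
    intro w
    rw [hΦ.antisymm, hv w, neg_zero]

lemma dm_perp [FiniteDimensional k V] (hΦ : GoodForm Φ) (N : Submodule k V) :
    dm (perpB Φ N) = Module.finrank k V - dm N := by
  rw [perpB_eq]
  unfold dm
  rw [LinearMap.BilinForm.finrank_orthogonal hΦ.nondeg, Nat.cast_sub (Submodule.finrank_le N)]

lemma perp_perp [FiniteDimensional k V] (hΦ : GoodForm Φ) (N : Submodule k V) :
    perpB Φ (perpB Φ N) = N := by
  rw [perpB_eq, perpB_eq, LinearMap.BilinForm.orthogonal_orthogonal hΦ.nondeg hΦ.refl]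

lemma perp_anti {M N : Submodule k V} (h : M ≤ N) : perpB Φ N ≤ perpB Φ M :=
  fun _ hv u hu => hv u (h hu)

lemma perp_inf (M N : Submodule k V) : perpB Φ M ⊓ perpB Φ N = perpB Φ (M ⊔ N) := by
  apply le_antisymm
  · rintro v ⟨h1, h2⟩ u hu
    obtain ⟨a, ha, b, hb, rfl⟩ := Submodule.mem_sup.1 hu
    rw [map_add, LinearMap.add_apply, h1 a ha, h2 b hb, add_zero]
  · exact le_inf (perp_anti le_sup_left) (perp_anti le_sup_right)

lemma dm_flag_symm [FiniteDimensional k V] (hΦ : GoodForm Φ) {L L' : ℕ → Submodule k V}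
    (hL : IsFlag Φ n L) (hL' : IsFlag Φ n L') {i j : ℕ} (hi : i ≤ n) (hj : j ≤ n) :
    dm (L (n - i) ⊓ L' (n - j)) = Module.finrank k V - dm (L i) - dm (L' j) + dm (L i ⊓ L' j) := by
  rw [hL.2.2.2 i hi, hL'.2.2.2 j hj, perp_inf, dm_perp hΦ]
  have := dm_sup_inf (L i) (L' j)
  linarith

lemma mt_symm [FiniteDimensional k V] (hΦ : GoodForm Φ) {L L' : ℕ → Submodule k V}
    (hL : IsFlag Φ n L) (hL' : IsFlag Φ n L') {i j : ℕ} (hi : i ∈ Finset.Icc 1 n)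
    (hj : j ∈ Finset.Icc 1 n) : mt L L' (n + 1 - i) (n + 1 - j) = mt L L' i j := by
  rw [Finset.mem_Icc] at hi hj
  unfold mt
  have e1 : n + 1 - i = n - (i - 1) := by omega
  have e2 : n + 1 - j = n - (j - 1) := by omega
  have e3 : n - (i - 1) - 1 = n - i := by omega
  have e4 : n - (j - 1) - 1 = n - j := by omega
  rw [e1, e2, e3, e4, dm_flag_symm hΦ hL hL' (by omega) (by omega),
    dm_flag_symm hΦ hL hL' (by omega) (by omega), dm_flag_symm hΦ hL hL' (by omega) (by omega),
    dm_flag_symm hΦ hL hL' (by omega) (by omega)]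
  ring

/-! ### Adjacent flags -/

/-- `L'` is obtained from `L` by enlarging the `h`-th step inside `L (h+1)`. -/
def Adj (n h R : ℕ) (L L' : ℕ → Submodule k V) : Prop :=
  (∀ i, i ≠ h → i ≠ n - h → L' i = L i) ∧ L h ≤ L' h ∧ L' h ≤ L (h + 1) ∧
    dm (L' h) = dm (L h) + R

lemma adj_of_mt [FiniteDimensional k V] {L L' : ℕ → Submodule k V} (hL : IsFlag Φ n L)
    (hL' : IsFlag Φ n L') {h R : ℕ} (hh1 : 1 ≤ h) (hhn : 2 * h + 2 < n)
    (hC : ∀ i ∈ Finset.Icc 1 n, ∀ j ∈ Finset.Icc 1 n, i ≠ j →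
      mt L L' i j = (R : ℤ) * Eth n (h + 1) h i j) : Adj n h R L L' := by
  have l1 : ∀ i, i ≠ n - h → L i ≤ L' i := by
    intro i hi
    apply le_of_mt_zero hL hL'
    intro a b ha1 hai hib hbn
    rw [hC a (by simp; omega) b (by simp; omega) (by omega)]
    unfold Eth
    rw [if_neg (by omega), if_neg (by omega)]
    simp
  have l2 : ∀ i, i ≠ h → L' i ≤ L i := by
    intro i hi
    apply le_of_mt_zero hL' hL
    intro a b ha1 hai hib hbn
    rw [mt_comm, hC b (by simp; omega) a (by simp; omega) (by omega)]
    unfold Eth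
    rw [if_neg (by omega), if_neg (by omega)]
    simp
  have l3 : ∀ i, i ≠ h → i ≠ n - h → L' i = L i := fun i h1 h2 => le_antisymm (l2 i h1) (l1 i h2)
  have l4 : L' h ≤ L (h + 1) := by
    rw [← l3 (h + 1) (by omega) (by omega)]
    exact hL'.2.1 h
  refine ⟨l3, l1 h (by omega), l4, ?_⟩
  have := hC (h + 1) (by simp; omega) h (by simp; omega) (by omega)
  unfold Eth mt at this
  rw [if_pos ⟨rfl, rfl⟩, if_neg (by omega), Nat.add_sub_cancel, l3 (h - 1) (by omega) (by omega),
    inf_eq_right.2 l4, inf_eq_left.2 (l1 h (by omega)), inf_eq_right.2 (hL.mono (by omega)),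
    inf_eq_right.2 (hL.mono (by omega))] at this
  linarith

lemma Adj.upper [FiniteDimensional k V] (hΦ : GoodForm Φ) {L L' : ℕ → Submodule k V}
    (hL : IsFlag Φ n L) (hL' : IsFlag Φ n L') {h R : ℕ} (hhn : 2 * h + 2 < n)
    (hA : Adj n h R L L') : L (n - h - 1) ≤ L' (n - h) ∧ L' (n - h) ≤ L (n - h) ∧
      dm (L (n - h)) = dm (L' (n - h)) + R := by
  have e1 := hL.2.2.2 h (by omega)
  have e2 := hL'.2.2.2 h (by omega)
  have e3 := hL.2.2.2 (h + 1) (by omega)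
  rw [show n - (h + 1) = n - h - 1 by omega] at e3
  rw [e1, e2, e3]
  refine ⟨perp_anti hA.2.2.1, perp_anti hA.2.1, ?_⟩
  rw [dm_perp hΦ, dm_perp hΦ, hA.2.2.2]
  ring

lemma mt_of_adj [FiniteDimensional k V] (hΦ : GoodForm Φ) {L L' : ℕ → Submodule k V}
    (hL : IsFlag Φ n L) (hL' : IsFlag Φ n L') {h R : ℕ} (hh1 : 1 ≤ h) (hhn : 2 * h + 2 < n)
    (hA : Adj n h R L L') :
    ∀ i ∈ Finset.Icc 1 n, ∀ j ∈ Finset.Icc 1 n, i ≠ j →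
      mt L L' i j = (R : ℤ) * Eth n (h + 1) h i j := by
  obtain ⟨u1, u2, u3⟩ := hA.upper hΦ hL hL' hhn
  obtain ⟨a1, a2, a3, a4⟩ := hA
  have s1 : ∀ i j, j < i → L i ⊓ L' j = L' j := by
    intro i j hij
    rw [inf_eq_right]
    by_cases hj : j = h
    · subst hj
      exact a3.trans (hL.mono hij)
    by_cases hj2 : j = n - h
    · subst hj2
      exact u2.trans (hL.mono hij.le)
    rw [a1 j hj hj2]
    exact hL.mono hij.le
  have s2 : ∀ i j, i < j → L i ⊓ L' j = L i := by
    intro i j hij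
    rw [inf_eq_left]
    by_cases hj : j = h
    · subst hj
      exact (hL.mono hij.le).trans a2
    by_cases hj2 : j = n - h
    · subst hj2
      exact (hL.mono (by omega)).trans u1
    rw [a1 j hj hj2]
    exact hL.mono hij.le
  have s3 : ∀ i, i ≠ h → L i ⊓ L' i = L' i := by
    intro i hi
    rw [inf_eq_right]
    by_cases hj2 : i = n - h
    · subst hj2
      exact u2
    rw [a1 i hi hj2]
  have s4 : ∀ i, i ≠ n - h → L i ⊓ L' i = L i := by
    intro i hi
    rw [inf_eq_left]
    by_cases hj2 : i = h
    · subst hj2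
      exact a2
    rw [a1 i hj2 hi]
  intro i hi j hj hij
  rw [Finset.mem_Icc] at hi hj
  unfold mt Eth
  rcases Nat.lt_or_gt_of_ne hij with hlt | hlt
  · rw [s2 i j hlt, s2 (i - 1) j (by omega), s2 (i - 1) (j - 1) (by omega)]
    rw [if_neg (by omega)]
    by_cases hc : i = j - 1
    · rw [← hc]
      by_cases hd : i = n - h
      · rw [s3 i (by omega), if_pos (by omega), hd, u3]
        ring
      · rw [s4 i hd, if_neg (by omega)]
        ring
    · rw [s2 i (j - 1) (by omega), if_neg (by omega)]
      ring
  · rw [s1 i j hlt, s1 i (j - 1) (by omega), s1 (i - 1) (j - 1) (by omega)]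
    rw [if_neg (c := i = n + 1 - (h + 1) ∧ j = n + 1 - h) (by omega)]
    by_cases hc : i - 1 = j
    · rw [hc]
      by_cases hd : j = h
      · rw [s4 j (by omega), if_pos (by omega), hd, a4]
        ring
      · rw [s3 j hd, if_neg (by omega)]
        ring
    · rw [s1 (i - 1) j (by omega), if_neg (by omega)]
      ring

/-- Modification of a flag. -/
def modL (Φ : V →ₗ[k] V →ₗ[k] k) (n h : ℕ) (L : ℕ → Submodule k V) (T : Submodule k V) :
    ℕ → Submodule k V := fun i => if i = h then T else if i = n - h then perpB Φ T else L i

lemma modL_isFlag [FiniteDimensional k V] (hΦ : GoodForm Φ) {L : ℕ → Submodule k V}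
    (hL : IsFlag Φ n L) {h : ℕ} (hh1 : 1 ≤ h) (hhn : 2 * h + 2 < n) {T : Submodule k V}
    (h1 : L h ≤ T) (h2 : T ≤ L (h + 1)) : IsFlag Φ n (modL Φ n h L T) := by
  have e1 := hL.2.2.2 h (by omega)
  have e3 := hL.2.2.2 (h + 1) (by omega)
  refine ⟨?_, ?_, ?_, ?_⟩
  · unfold modL
    rw [if_neg (by omega), if_neg (by omega), hL.1]
  · intro i
    unfold modL
    by_cases c1 : i = h
    · rw [if_pos c1, if_neg (by omega), if_neg (by omega), c1]
      exact h2
    by_cases c2 : i + 1 = h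
    · rw [if_neg c1, if_neg (by omega), if_pos c2]
      exact (hL.mono (by omega)).trans h1
    rw [if_neg c1, if_neg c2]
    by_cases c3 : i = n - h
    · rw [if_pos c3, if_neg (by omega)]
      refine (perp_anti h1).trans ?_
      rw [← e1]
      exact hL.mono (by omega)
    rw [if_neg c3]
    by_cases c4 : i + 1 = n - h
    · rw [if_pos c4]
      refine le_trans ?_ (perp_anti h2)
      rw [← e3]
      exact hL.mono (by omega)
    rw [if_neg c4]
    exact hL.2.1 i
  · intro i hi
    unfold modL
    rw [if_neg (by omega), if_neg (by omega), hL.2.2.1 i hi]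
  · intro i hi
    unfold modL
    by_cases c1 : i = h
    · rw [if_pos c1, if_neg (by omega), if_pos (by omega)]
    by_cases c2 : i = n - h
    · rw [if_pos (by omega), if_neg c1, if_pos c2, perp_perp hΦ]
    rw [if_neg (by omega), if_neg (by omega), if_neg c1, if_neg c2]
    exact hL.2.2.2 i hi

/-- Relative position of the pair `P ≤ T` against the flag. -/
def tau (P T : Submodule k V) (F : ℕ → Submodule k V) (u : ℕ) : ℤ :=
  dm (T ⊓ F u) - dm (P ⊓ F u) - dm (T ⊓ F (u - 1)) + dm (P ⊓ F (u - 1))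

lemma mt_adj_h {L L' F : ℕ → Submodule k V} {h R : ℕ} (hh1 : 1 ≤ h) (hhn : 2 * h + 2 < n)
    (hA : Adj n h R L L') (u : ℕ) : mt L' F h u = mt L F h u + tau (L h) (L' h) F u := by
  unfold mt tau
  rw [hA.1 (h - 1) (by omega) (by omega)]
  ring

lemma mt_adj_h1 {L L' F : ℕ → Submodule k V} {h R : ℕ} (hhn : 2 * h + 2 < n)
    (hA : Adj n h R L L') (u : ℕ) :
    mt L' F (h + 1) u = mt L F (h + 1) u - tau (L h) (L' h) F u := by
  unfold mt tau
  rw [hA.1 (h + 1) (by omega) (by omega), Nat.add_sub_cancel]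
  ring

lemma mt_adj_other {L L' F : ℕ → Submodule k V} {h R : ℕ} (hA : Adj n h R L L') {i : ℕ}
    (hi : 1 ≤ i) (i1 : i ≠ h) (i2 : i ≠ h + 1) (i3 : i ≠ n - h) (i4 : i ≠ n - h + 1) (u : ℕ) :
    mt L' F i u = mt L F i u := by
  unfold mt
  rw [hA.1 i (by omega) (by omega), hA.1 (i - 1) (by omega) (by omega)]

/-- The shifted matrix. -/
def Mt (n h : ℕ) (A : ℕ → ℕ → ℤ) (t : ℕ → ℕ) : ℕ → ℕ → ℤ := fun a b =>
  A a b - ∑ u ∈ Finset.Icc 1 n, (t u : ℤ) * (Eth n h u a b - Eth n (h + 1) u a b)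

lemma sum_Eth (t : ℕ → ℕ) (i a b : ℕ) (hb : b ∈ Finset.Icc 1 n) :
    ∑ u ∈ Finset.Icc 1 n, (t u : ℤ) * Eth n i u a b =
      (if a = i then (t b : ℤ) else 0) + (if a = n + 1 - i then (t (n + 1 - b) : ℤ) else 0) := by
  have hb' := Finset.mem_Icc.1 hb
  unfold Eth
  simp only [mul_add, Finset.sum_add_distrib]
  congr 1
  · rw [Finset.sum_eq_single b]
    · simp
    · intro u _ hu
      rw [if_neg (fun h => hu h.2.symm), mul_zero]
    · intro h
      exact absurd hb h
  · rw [Finset.sum_eq_single (n + 1 - b)]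
    · have : n + 1 - (n + 1 - b) = b := by omega
      simp [this]
    · intro u hu hub
      rw [Finset.mem_Icc] at hu
      rw [if_neg (by omega), mul_zero]
    · intro h
      exact absurd (Finset.mem_Icc.2 ⟨by omega, by omega⟩) h

lemma Mt_eq (h : ℕ) (A : ℕ → ℕ → ℤ) (t : ℕ → ℕ) (a b : ℕ) (hb : b ∈ Finset.Icc 1 n) :
    Mt n h A t a b = A a b -
      ((if a = h then (t b : ℤ) else 0) + (if a = n + 1 - h then (t (n + 1 - b) : ℤ) else 0)) +
      ((if a = h + 1 then (t b : ℤ) else 0) +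
        (if a = n + 1 - (h + 1) then (t (n + 1 - b) : ℤ) else 0)) := by
  unfold Mt
  simp only [mul_sub, Finset.sum_sub_distrib]
  rw [sum_Eth t h a b hb, sum_Eth t (h + 1) a b hb]
  ring

lemma adj_iff [FiniteDimensional k V] (hΦ : GoodForm Φ) {L L' F : ℕ → Submodule k V}
    (hL : IsFlag Φ n L) (hL' : IsFlag Φ n L') (hF : IsFlag Φ n F) {h R : ℕ} (hh1 : 1 ≤ h)
    (hhn : 2 * h + 2 < n) (hAdj : Adj n h R L L') (A : ℕ → ℕ → ℤ)
    (t : ℕ → ℕ) (ht : ∀ u ∈ Finset.Icc 1 n, tau (L h) (L' h) F u = t u) :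
    (∀ i ∈ Finset.Icc 1 n, ∀ j ∈ Finset.Icc 1 n, mt L' F i j = A i j) ↔
    (∀ i ∈ Finset.Icc 1 n, ∀ j ∈ Finset.Icc 1 n, mt L F i j = Mt n h A t i j) := by
  refine forall_congr' fun i => forall_congr' fun hi => forall_congr' fun j =>
    forall_congr' fun hj => ?_
  have hi' := Finset.mem_Icc.1 hi
  have hj' := Finset.mem_Icc.1 hj
  have hj2 : n + 1 - j ∈ Finset.Icc 1 n := Finset.mem_Icc.2 ⟨by omega, by omega⟩
  rw [Mt_eq h A t i j hj]
  by_cases i1 : i = h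
  · subst i1
    rw [mt_adj_h hh1 hhn hAdj, ht j hj, if_pos rfl, if_neg (by omega), if_neg (by omega),
      if_neg (by omega)]
    constructor <;> intro <;> linarith
  by_cases i2 : i = h + 1
  · subst i2
    rw [mt_adj_h1 hhn hAdj, ht j hj, if_neg (by omega), if_neg (by omega), if_pos rfl,
      if_neg (by omega)]
    constructor <;> intro <;> linarith
  rw [if_neg i1, if_neg i2]
  by_cases i3 : i = n + 1 - h
  · have e : n + 1 - i = h := by omega
    rw [if_pos i3, if_neg (by omega), ← mt_symm hΦ hL' hF hi hj, ← mt_symm hΦ hL hF hi hj, e,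
      mt_adj_h hh1 hhn hAdj, ht _ hj2]
    constructor <;> intro <;> linarith
  by_cases i4 : i = n + 1 - (h + 1)
  · have e : n + 1 - i = h + 1 := by omega
    rw [if_neg i3, if_pos i4, ← mt_symm hΦ hL' hF hi hj, ← mt_symm hΦ hL hF hi hj, e,
      mt_adj_h1 hhn hAdj, ht _ hj2]
    constructor <;> intro <;> linarith
  rw [if_neg i3, if_neg i4, mt_adj_other hAdj hi'.1 i1 i2 (by omega) (by omega)]
  constructor <;> intro <;> linarith

end flags

section main

variable {Φ : V →ₗ[k] V →ₗ[k] k} {n : ℕ}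

/-- `C` is the relative position of adjacent flags. -/
lemma mt_eq_C [FiniteDimensional k V] (hΦ : GoodForm Φ) {L L' F : ℕ → Submodule k V}
    (hL : IsFlag Φ n L) (hL' : IsFlag Φ n L') (hF : IsFlag Φ n F) {h R : ℕ} (hh1 : 1 ≤ h)
    (hhn : 2 * h + 2 < n) (hAdj : Adj n h R L L') (A C : ℕ → ℕ → ℤ)
    (hA : ∀ i ∈ Finset.Icc 1 n, ∀ j ∈ Finset.Icc 1 n, mt L' F i j = A i j)
    (hroco : ∀ i ∈ Finset.Icc 1 n, roM n A i = coM n C i)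
    (hCdiag : ∀ i ∈ Finset.Icc 1 n, ∀ j ∈ Finset.Icc 1 n, i ≠ j →
      C i j = (R : ℤ) * Eth n (h + 1) h i j) :
    ∀ i ∈ Finset.Icc 1 n, ∀ j ∈ Finset.Icc 1 n, mt L L' i j = C i j := by
  have off := mt_of_adj hΦ hL hL' hh1 hhn hAdj
  intro i hi j hj
  by_cases hij : i = j
  · subst hij
    have h1 := hroco i hi
    unfold roM coM at h1
    have h2 := mt_rowsum (L := L') hF i
    rw [Finset.sum_congr rfl (fun j hj => hA i hi j hj), h1, ← mt_colsum hL,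
      ← Finset.add_sum_erase _ _ hi, ← Finset.add_sum_erase _ (fun a => mt L L' a i) hi] at h2
    have h3 : ∑ x ∈ (Finset.Icc 1 n).erase i, C x i
        = ∑ x ∈ (Finset.Icc 1 n).erase i, mt L L' x i := by
      refine Finset.sum_congr rfl fun x hx => ?_
      rw [Finset.mem_erase] at hx
      rw [hCdiag x hx.2 i hi hx.1, off x hx.2 i hi hx.1]
    rw [h3] at h2
    exact (add_right_cancel h2).symm
  · rw [off i hi j hj hij, hCdiag i hi j hj hij]

lemma sum_tau {P T : Submodule k V} {F : ℕ → Submodule k V} (hF : IsFlag Φ n F) :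
    ∑ u ∈ Finset.Icc 1 n, tau P T F u = dm T - dm P := by
  have := sum_tele (fun u => dm (T ⊓ F u) - dm (P ⊓ F u)) n
  simp only [hF.1, hF.2.2.1 n le_rfl, inf_top_eq, inf_bot_eq, sub_self, sub_zero] at this
  rw [← this]
  refine Finset.sum_congr rfl fun j _ => ?_
  unfold tau
  ring

lemma tau_nonneg [FiniteDimensional k V] {P T : Submodule k V} (hPT : P ≤ T)
    {F : ℕ → Submodule k V} (hF : IsFlag Φ n F) (u : ℕ) : 0 ≤ tau P T F u := by
  have := relDim_pos hPT (hF.mono (Nat.sub_le u 1))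
  unfold tau
  rw [← this]
  positivity

lemma finsum_ind {α : Type*} (p : α → Prop) :
    ∑ᶠ x, (if p x then (1 : ℚ) else 0) = (Nat.card {x // p x} : ℚ) := by
  have h1 : ∑ᶠ x, (if p x then (1 : ℚ) else 0) = ∑ᶠ x ∈ {x | p x}, (1 : ℚ) := by
    refine finsum_congr fun x => ?_
    by_cases hx : p x
    · simp [hx]
    · simp [hx]
  rw [h1]
  by_cases hfin : {x | p x}.Finite
  · rw [finsum_mem_eq_finite_toFinset_sum _ hfin, Finset.sum_const, nsmul_eq_mul, mul_one,
      ← Set.ncard_eq_toFinset_card _ hfin]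
    rfl
  · have h2 : Infinite {x // p x} := Set.infinite_coe_iff.2 hfin
    rw [Nat.card_eq_zero_of_infinite, Nat.cast_zero]
    apply finsum_mem_eq_zero_of_infinite
    have h3 : Function.support (fun _ : α => (1 : ℚ)) = Set.univ := by ext; simp
    rw [h3, Set.inter_univ]
    exact hfin

lemma card_S [Fintype k] [FiniteDimensional k V] (hΦ : GoodForm Φ) (L F : Flags Φ n)
    {h R : ℕ} (hh1 : 1 ≤ h) (hhn : 2 * h + 2 < n) (A C : ℕ → ℕ → ℤ)
    (hApos : ∀ i ∈ Finset.Icc 1 n, ∀ j ∈ Finset.Icc 1 n, 0 ≤ A i j)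
    (hroco : ∀ i ∈ Finset.Icc 1 n, roM n A i = coM n C i)
    (hCdiag : ∀ i ∈ Finset.Icc 1 n, ∀ j ∈ Finset.Icc 1 n, i ≠ j →
      C i j = (R : ℤ) * Eth n (h + 1) h i j)
    (t : ℕ → ℕ) (htR : ∑ u ∈ Finset.Icc 1 n, t u = R)
    (hM : ∀ i ∈ Finset.Icc 1 n, ∀ j ∈ Finset.Icc 1 n, mt L.1 F.1 i j = Mt n h A t i j) :
    (Nat.card {L' : Flags Φ n //
      (∀ i ∈ Finset.Icc 1 n, ∀ j ∈ Finset.Icc 1 n, mt L.1 L'.1 i j = C i j) ∧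
      (∀ i ∈ Finset.Icc 1 n, ∀ j ∈ Finset.Icc 1 n, mt L'.1 F.1 i j = A i j)} : ℚ) =
      (Fintype.card k : ℚ) ^ (∑ j ∈ Finset.Icc 1 n, ∑ u ∈ Finset.Icc 1 n,
                if j < u then A (h + 1) j * (t u : ℤ) else 0) *
      ∏ u ∈ Finset.Icc 1 n, qbinom (Fintype.card k : ℚ) (A (h + 1) u + (t u : ℤ)) (t u) := by
  have hhm : h ∈ Finset.Icc 1 n := Finset.mem_Icc.2 ⟨by omega, by omega⟩
  have hhm1 : h + 1 ∈ Finset.Icc 1 n := Finset.mem_Icc.2 ⟨by omega, by omega⟩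
  rw [← card_between (L.1 h) (L.1 (h + 1)) (L.2.2.1 h) F.1 n F.2.1 F.2.2.1 (F.2.2.2.1 n le_rfl) t
    (A (h + 1)) (hApos (h + 1) hhm1)]
  · congr 1
    have hadj : ∀ L' : {L' : Flags Φ n //
      (∀ i ∈ Finset.Icc 1 n, ∀ j ∈ Finset.Icc 1 n, mt L.1 L'.1 i j = C i j) ∧
      (∀ i ∈ Finset.Icc 1 n, ∀ j ∈ Finset.Icc 1 n, mt L'.1 F.1 i j = A i j)},
        Adj n h R L.1 L'.1.1 := by
      intro L'
      apply adj_of_mt L.2 L'.1.2 hh1 hhn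
      intro i hi j hj hij
      rw [L'.2.1 i hi j hj, hCdiag i hi j hj hij]
    refine Nat.card_eq_of_bijective (fun L' => ⟨L'.1.1 h, (hadj L').2.1, (hadj L').2.2.1, ?_⟩) ?_
    · intro u hu
      have h1 := mt_adj_h (F := F.1) hh1 hhn (hadj L') u
      have h2 := hM h hhm u hu
      rw [Mt_eq h A t h u hu, if_pos rfl, if_neg (by omega), if_neg (by omega),
        if_neg (by omega)] at h2
      have h3 := L'.2.2 h hhm u hu
      unfold tau at h1
      linarith
    · constructor
      · intro L1 L2 h12
        have h12' : L1.1.1 h = L2.1.1 h := congrArg Subtype.val h12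
        apply Subtype.ext
        apply Subtype.ext
        funext i
        by_cases i1 : i = h
        · rw [i1, h12']
        by_cases i2 : i = n - h
        · rw [i2, L1.1.2.2.2.2 h (by omega), L2.1.2.2.2.2 h (by omega), h12']
        rw [(hadj L1).1 i i1 i2, (hadj L2).1 i i1 i2]
      · rintro ⟨T, hT1, hT2, hT3⟩
        have hfl := modL_isFlag hΦ L.2 hh1 hhn hT1 hT2
        have hmh : modL Φ n h L.1 T h = T := by unfold modL; rw [if_pos rfl]
        have hA' : Adj n h R L.1 (modL Φ n h L.1 T) := by
          refine ⟨?_, ?_, ?_, ?_⟩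
          · intro i i1 i2
            unfold modL
            rw [if_neg i1, if_neg i2]
          · rw [hmh]
            exact hT1
          · rw [hmh]
            exact hT2
          · rw [hmh]
            have h1 := sum_tau (P := L.1 h) (T := T) F.2
            rw [Finset.sum_congr rfl (show ∀ u ∈ Finset.Icc 1 n, tau (L.1 h) T F.1 u = t u from hT3), ← Nat.cast_sum, htR] at h1
            linarith
        have hmA := (adj_iff hΦ L.2 hfl F.2 hh1 hhn hA' A t (by rw [hmh]; exact hT3)).2 hM
        have hmC := mt_eq_C hΦ L.2 hfl F.2 hh1 hhn hA' A C hmA hroco hCdiag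
        exact ⟨⟨⟨_, hfl⟩, hmC, hmA⟩, Subtype.ext hmh⟩
  · intro u hu
    have h2 := hM (h + 1) hhm1 u hu
    rw [Mt_eq h A t (h + 1) u hu, if_neg (by omega), if_neg (by omega), if_pos rfl,
        if_neg (by omega)] at h2
    unfold mt at h2
    rw [Nat.add_sub_cancel] at h2
    linarith

/-- Existence of `t` from a middle flag. -/
lemma exists_t [FiniteDimensional k V] (hΦ : GoodForm Φ) {L L' F : ℕ → Submodule k V}
    (hL : IsFlag Φ n L) (hL' : IsFlag Φ n L') (hF : IsFlag Φ n F) {h R : ℕ} (hh1 : 1 ≤ h)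
    (hhn : 2 * h + 2 < n) (hAdj : Adj n h R L L') (A : ℕ → ℕ → ℤ)
    (hA : ∀ i ∈ Finset.Icc 1 n, ∀ j ∈ Finset.Icc 1 n, mt L' F i j = A i j) :
    ∃ t : ℕ → ℕ, ((∀ u, t u ≠ 0 → u ∈ Finset.Icc 1 n) ∧ (∑ u ∈ Finset.Icc 1 n, t u = R) ∧
            (∀ u ∈ Finset.Icc 1 n, (t u : ℤ) ≤ A h u)) ∧
      ∀ i ∈ Finset.Icc 1 n, ∀ j ∈ Finset.Icc 1 n, mt L F i j = Mt n h A t i j := by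
  have hhm : h ∈ Finset.Icc 1 n := Finset.mem_Icc.2 ⟨by omega, by omega⟩
  let t : ℕ → ℕ := fun u => if u ∈ Finset.Icc 1 n then (tau (L h) (L' h) F u).toNat else 0
  have ht : ∀ u ∈ Finset.Icc 1 n, tau (L h) (L' h) F u = t u := by
    intro u hu
    simp only [t]
    rw [if_pos hu, Int.toNat_of_nonneg (tau_nonneg hAdj.2.1 hF u)]
  refine ⟨t, ⟨?_, ?_, ?_⟩, ?_⟩
  · intro u hu
    by_contra hc
    exact hu (if_neg hc)
  · have h1 := sum_tau (P := L h) (T := L' h) hF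
    rw [Finset.sum_congr rfl ht, hAdj.2.2.2, ← Nat.cast_sum] at h1
    have h2 : ((∑ u ∈ Finset.Icc 1 n, t u : ℕ) : ℤ) = (R : ℤ) := by rw [h1]; ring
    exact_mod_cast h2
  · intro u hu
    have h1 := mt_adj_h (F := F) hh1 hhn hAdj u
    have h2 := mt_nonneg hL.mono hF.mono h u
    rw [ht u hu, hA h hhm u hu] at h1
    linarith
  · exact (adj_iff hΦ hL hL' hF hh1 hhn hAdj A t ht).1 hA

end main

end FlagC

open FlagC

/-- multiplication by a divided power of `f_h`, `1 ≤ h ≤ r-1`, finite type `C`. -/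
theorem statement2 {k V : Type*} [Field k] [Fintype k] [AddCommGroup V] [Module k V]
    [FiniteDimensional k V]
    (hodd : Odd (Fintype.card k))
    (r d : ℕ) (hr : 2 ≤ r) (hd : 1 ≤ d)
    (hdim : Module.finrank k V = 2 * d)
    (Φ : V →ₗ[k] V →ₗ[k] k)
    (halt : ∀ v : V, Φ v v = 0)
    (hnondeg : ∀ v : V, (∀ w : V, Φ v w = 0) → v = 0)
    (A C : ℕ → ℕ → ℤ)
    (hA : MemXiC (2 * r + 1) d A) (hC : MemXiC (2 * r + 1) d C)
    (hroco : ∀ i ∈ Finset.Icc 1 (2 * r + 1), roM (2 * r + 1) A i = coM (2 * r + 1) C i)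
    (h R : ℕ) (hh1 : 1 ≤ h) (hhr : h ≤ r - 1)
    (hCdiag : ∀ i ∈ Finset.Icc 1 (2 * r + 1), ∀ j ∈ Finset.Icc 1 (2 * r + 1), i ≠ j →
      C i j = (R : ℤ) * Eth (2 * r + 1) (h + 1) h i j) :
    ∀ LL : Flags Φ (2 * r + 1) × Flags Φ (2 * r + 1),
      conv Φ (2 * r + 1) (eMat Φ (2 * r + 1) C) (eMat Φ (2 * r + 1) A) LL =
      ∑ᶠ t : ℕ → ℕ,
        if (∀ u, t u ≠ 0 → u ∈ Finset.Icc 1 (2 * r + 1)) ∧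
            (∑ u ∈ Finset.Icc 1 (2 * r + 1), t u = R) ∧
            (∀ u ∈ Finset.Icc 1 (2 * r + 1), (t u : ℤ) ≤ A h u)
        then
          ((Fintype.card k : ℚ) ^
              (∑ j ∈ Finset.Icc 1 (2 * r + 1), ∑ u ∈ Finset.Icc 1 (2 * r + 1),
                if j < u then A (h + 1) j * (t u : ℤ) else 0)) *
            (∏ u ∈ Finset.Icc 1 (2 * r + 1),
              qbinom (Fintype.card k : ℚ) (A (h + 1) u + (t u : ℤ)) (t u)) *
            eMat Φ (2 * r + 1)
              (fun a b => A a b - ∑ u ∈ Finset.Icc 1 (2 * r + 1),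
                (t u : ℤ) * (Eth (2 * r + 1) h u a b - Eth (2 * r + 1) (h + 1) u a b)) LL
        else 0 := by
  have hΦ : GoodForm Φ := ⟨halt, hnondeg⟩
  have hhn : 2 * h + 2 < 2 * r + 1 := by omega
  generalize 2 * r + 1 = n at *
  rintro ⟨L, F⟩
  have hhm : h ∈ Finset.Icc 1 n := Finset.mem_Icc.2 ⟨by omega, by omega⟩
  have hlhs : conv Φ n (eMat Φ n C) (eMat Φ n A) (L, F) = (Nat.card {L' : Flags Φ n //
      (∀ i ∈ Finset.Icc 1 n, ∀ j ∈ Finset.Icc 1 n, mt L.1 L'.1 i j = C i j) ∧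
      (∀ i ∈ Finset.Icc 1 n, ∀ j ∈ Finset.Icc 1 n, mt L'.1 F.1 i j = A i j)} : ℚ) := by
    rw [← finsum_ind]
    unfold conv
    refine finsum_congr fun L' => ?_
    simp only [eMat_eq]
    by_cases p1 : ∀ i ∈ Finset.Icc 1 n, ∀ j ∈ Finset.Icc 1 n, mt L.1 L'.1 i j = C i j
    · by_cases p2 : ∀ i ∈ Finset.Icc 1 n, ∀ j ∈ Finset.Icc 1 n, mt L'.1 F.1 i j = A i j
      · rw [if_pos p1, if_pos p2, if_pos ⟨p1, p2⟩, mul_one]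
      · rw [if_neg p2, mul_zero]
        exact (if_neg (fun hc => p2 hc.2)).symm
    · rw [if_neg p1, zero_mul]
      exact (if_neg (fun hc => p1 hc.1)).symm
  rw [hlhs]
  have hfold : ∀ t : ℕ → ℕ, (fun a b => A a b - ∑ u ∈ Finset.Icc 1 n,
      (t u : ℤ) * (Eth n h u a b - Eth n (h + 1) u a b)) = Mt n h A t := fun t => rfl
  simp only [hfold]
  by_cases hex : ∃ t : ℕ → ℕ, ((∀ u, t u ≠ 0 → u ∈ Finset.Icc 1 n) ∧
      (∑ u ∈ Finset.Icc 1 n, t u = R) ∧ (∀ u ∈ Finset.Icc 1 n, (t u : ℤ) ≤ A h u)) ∧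
      ∀ i ∈ Finset.Icc 1 n, ∀ j ∈ Finset.Icc 1 n, mt L.1 F.1 i j = Mt n h A t i j
  · obtain ⟨t, ht, hM⟩ := hex
    rw [finsum_eq_single _ t, if_pos ht, eMat_eq, if_pos hM, mul_one]
    · exact card_S hΦ L F hh1 hhn A C hA.1 hroco hCdiag t ht.2.1 hM
    · intro t' hne
      by_cases ht' : (∀ u, t' u ≠ 0 → u ∈ Finset.Icc 1 n) ∧
          (∑ u ∈ Finset.Icc 1 n, t' u = R) ∧ (∀ u ∈ Finset.Icc 1 n, (t' u : ℤ) ≤ A h u)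
      · rw [if_pos ht', eMat_eq, if_neg, mul_zero]
        intro hM'
        apply hne
        funext u
        by_cases hu : u ∈ Finset.Icc 1 n
        · have h1 := hM h hhm u hu
          have h2 := hM' h hhm u hu
          rw [Mt_eq h A _ h u hu, if_pos rfl, if_neg (by omega), if_neg (by omega),
            if_neg (by omega)] at h1 h2
          have : (t' u : ℤ) = t u := by linarith
          exact_mod_cast this
        · have h1 : t u = 0 := by
            by_contra hc
            exact hu (ht.1 u hc)
          have h2 : t' u = 0 := by
            by_contra hc
            exact hu (ht'.1 u hc)
          rw [h1, h2]
      · rw [if_neg ht']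
  · have hempty : IsEmpty {L' : Flags Φ n //
      (∀ i ∈ Finset.Icc 1 n, ∀ j ∈ Finset.Icc 1 n, mt L.1 L'.1 i j = C i j) ∧
      (∀ i ∈ Finset.Icc 1 n, ∀ j ∈ Finset.Icc 1 n, mt L'.1 F.1 i j = A i j)} := by
      constructor
      intro L'
      apply hex
      have hadj : Adj n h R L.1 L'.1.1 := by
        apply adj_of_mt L.2 L'.1.2 hh1 hhn
        intro i hi j hj hij
        rw [L'.2.1 i hi j hj, hCdiag i hi j hj hij]
      exact exists_t hΦ L.2 L'.1.2 F.2 hh1 hhn hadj A L'.2.2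
    rw [Nat.card_of_isEmpty, Nat.cast_zero]
    symm
    rw [finsum_eq_zero_of_forall_eq_zero]
    intro t
    by_cases ht : (∀ u, t u ≠ 0 → u ∈ Finset.Icc 1 n) ∧
          (∑ u ∈ Finset.Icc 1 n, t u = R) ∧ (∀ u ∈ Finset.Icc 1 n, (t u : ℤ) ≤ A h u)
    · rw [if_pos ht, eMat_eq, if_neg, mul_zero]
      intro hM
      exact hex ⟨t, ht, hM⟩
    · rw [if_neg ht]
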